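/- If the sequence (a_k)_{k≥1} is nonincreasing, then the sequence k ↦ a_k(k) is nondecreasing, and for all k ≥ 1 one has the uniform bound a_k(k) ≤ (1 + max_i a_i)/(1 − Σ_{i≥1} a_i). -/

import Mathlib

/-- A sequence satisfying the renewal equation `u k = 1 + ∑_{j<k} b j * u (k - 1 - j)` with
nonnegative weights `b` is nondecreasing. -/
theorem monotone_of_renewal {b u : ℕ → ℝ} (hb : ∀ i, 0 ≤ b i)
    (hu : ∀ k, u k = 1 + ∑ j ∈ Finset.range k, b j * u (k - 1 - j)) : Monotone u := by
  refine monotone_nat_of_le_succ fun k => ?_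
  induction k using Nat.strong_induction_on with
  | _ k ih =>
    have hu0 : u 0 = 1 := by simpa using hu 0
    rw [hu k, hu (k + 1), Finset.sum_range_succ]
    have hlast : 0 ≤ b k * u (k + 1 - 1 - k) := by
      simpa [hu0] using hb k
    have hsum : ∑ j ∈ Finset.range k, b j * u (k - 1 - j) ≤
        ∑ j ∈ Finset.range k, b j * u (k + 1 - 1 - j) := by
      refine Finset.sum_le_sum fun j hj => mul_le_mul_of_nonneg_left ?_ (hb j)
      have hjk := Finset.mem_range.mp hj
      have h := ih (k - 1 - j) (by lia)
      rwa [show k - 1 - j + 1 = k + 1 - 1 - j by lia] at h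
    linarith

/-- A solution of the renewal equation with summable nonnegative weights of total mass less
than one is bounded by `1 / (1 - ∑' i, b i)`. -/
theorem le_one_div_of_renewal {b u : ℕ → ℝ} (hb : ∀ i, 0 ≤ b i) (hs : Summable b)
    (hlt : ∑' i, b i < 1)
    (hu : ∀ k, u k = 1 + ∑ j ∈ Finset.range k, b j * u (k - 1 - j)) (k : ℕ) :
    u k ≤ 1 / (1 - ∑' i, b i) := by
  have hmono := monotone_of_renewal hb hu
  have hu0 : u 0 = 1 := by simpa using hu 0
  have hpos : 0 ≤ u k := by linarith [hmono (Nat.zero_le k)]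
  have hsum : ∑ j ∈ Finset.range k, b j * u (k - 1 - j) ≤ (∑' i, b i) * u k :=
    calc ∑ j ∈ Finset.range k, b j * u (k - 1 - j)
        ≤ ∑ j ∈ Finset.range k, b j * u k :=
          Finset.sum_le_sum fun j _ => mul_le_mul_of_nonneg_left (hmono (by lia)) (hb j)
      _ = (∑ j ∈ Finset.range k, b j) * u k := (Finset.sum_mul ..).symm
      _ ≤ (∑' i, b i) * u k :=
          mul_le_mul_of_nonneg_right (hs.sum_le_tsum _ fun i _ => hb i) hpos
  rw [le_div_iff₀ (by linarith)]
  linarith [hu k]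

/-- If the sequence `(a_k)_{k≥1}` is nonincreasing, then the diagonal
coefficients `a_k(k)` (defined by `a_0(0)=1`, `a_1(1)=1+a_1` and, for `k ≥ 2`,
`a_k(k) = 1 + a_k + Σ_{l=1}^{k−1} a_l(l)·a_{k−l}`) form a nondecreasing sequence in `k`,
and for all `k ≥ 1` one has `a_k(k) ≤ (1 + max_i a_i)/(1 − Σ_{i≥1} a_i)`. -/
theorem diagonal_coefficients_monotone_and_bounded
    (a : ℕ → ℝ) (ha : ∀ i, 0 ≤ a (i + 1))
    (haSum : Summable fun i => a (i + 1)) (haLt : ∑' i, a (i + 1) < 1)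
    (haMono : ∀ k, 1 ≤ k → a (k + 1) ≤ a k)
    (d : ℕ → ℝ)
    (hd0 : d 0 = 1)
    (hd1 : d 1 = 1 + a 1)
    (hdrec : ∀ k, 2 ≤ k → d k = 1 + a k + ∑ l ∈ Finset.Ico 1 k, d l * a (k - l)) :
    (∀ j k, j ≤ k → d j ≤ d k) ∧
      (∀ k, 1 ≤ k → d k ≤ (1 + ⨆ i : ℕ, a (i + 1)) / (1 - ∑' i, a (i + 1))) := by
  have hrenewal : ∀ k, d k = 1 + ∑ j ∈ Finset.range k, a (j + 1) * d (k - 1 - j) := by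
    intro k
    rw [← Finset.sum_range_reflect]
    have hreindex : ∑ j ∈ Finset.range k, a (k - 1 - j + 1) * d (k - 1 - (k - 1 - j)) =
        ∑ l ∈ Finset.range k, d l * a (k - l) := by
      refine Finset.sum_congr rfl fun l hl => ?_
      have hlk := Finset.mem_range.mp hl
      rw [show k - 1 - l + 1 = k - l by lia, show k - 1 - (k - 1 - l) = l by lia, mul_comm]
    rw [hreindex]
    rcases lt_or_ge k 2 with hk | hk
    · interval_cases k <;> simp [hd0, hd1]
    · rw [Finset.range_eq_Ico, Finset.sum_eq_sum_Ico_succ_bot (by lia), hdrec k hk]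
      simp [hd0, add_assoc]
  refine ⟨fun j k hjk => monotone_of_renewal ha hrenewal hjk, fun k _ => ?_⟩
  refine (le_one_div_of_renewal ha haSum haLt hrenewal k).trans ?_
  exact div_le_div_of_nonneg_right (le_add_of_nonneg_right (Real.iSup_nonneg ha))
    (by linarith)
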